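/- Let X be a compact metric space and f : X → X a continuous map. Let 𝒜 be a finite collection of attractors of f which contains ∅ and Inv(X), is closed under binary union, and is closed under the operation (A, A') ↦ Inv(A ∩ A'). Then there exists a map k assigning to each A ∈ 𝒜 a subset k(A) ⊆ X such that: each k(A) is an attracting neighborhood with Inv(k(A)) = A; k(∅) = ∅ and k(Inv(X)) = X; and for all A, A' ∈ 𝒜, k(A ∪ A') = k(A) ∪ k(A') and k(Inv(A ∩ A')) = k(A) ∩ k(A'). In particular k is injective. -/

import Mathlib

open Set

/-- The maximal invariant set in `U`: the union of all subsets `S ⊆ U` with `f '' S = S`. -/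
def MaxInv {Y : Type*} (f : Y → Y) (U : Set Y) : Set Y :=
  ⋃₀ {S : Set Y | S ⊆ U ∧ f '' S = S}

/-- The maximal forward invariant set in `U`: the union of all subsets `S ⊆ U`
with `f '' S ⊆ S`. -/
def MaxInvPlus {Y : Type*} (f : Y → Y) (U : Set Y) : Set Y :=
  ⋃₀ {S : Set Y | S ⊆ U ∧ f '' S ⊆ S}

/-- The omega-limit set `ω(U) = ⋂_{n ≥ 0} cl (⋃_{m ≥ n} f^[m] '' U)`. -/
def OmegaLim {Y : Type*} [TopologicalSpace Y] (f : Y → Y) (U : Set Y) : Set Y :=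
  ⋂ n : ℕ, closure (⋃ m ≥ n, f^[m] '' U)

/-- The alpha-limit set `α(U) = ⋂_{n ≥ 0} cl (⋃_{m ≥ n} (f^[m]) ⁻¹' U)`. -/
def AlphaLim {Y : Type*} [TopologicalSpace Y] (f : Y → Y) (U : Set Y) : Set Y :=
  ⋂ n : ℕ, closure (⋃ m ≥ n, f^[m] ⁻¹' U)

/-- A trapping region: a forward invariant set `U` with `f^[n] '' cl U ⊆ int U`
for some `n ≥ 1`. -/
def IsTrappingRegion {Y : Type*} [TopologicalSpace Y] (f : Y → Y) (U : Set Y) : Prop :=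
  f '' U ⊆ U ∧ ∃ n : ℕ, 1 ≤ n ∧ f^[n] '' closure U ⊆ interior U

/-- An attractor: `A = Inv(U)` for some trapping region `U`. -/
def IsAttractor {Y : Type*} [TopologicalSpace Y] (f : Y → Y) (A : Set Y) : Prop :=
  ∃ U : Set Y, IsTrappingRegion f U ∧ A = MaxInv f U

/-- An attracting neighborhood: `ω(U) ⊆ int U`. -/
def IsAttractingNbhd {Y : Type*} [TopologicalSpace Y] (f : Y → Y) (U : Set Y) : Prop :=
  OmegaLim f U ⊆ interior U

/-- A repelling region: a backward invariant set `U` with `(f^[n]) ⁻¹' cl U ⊆ int U`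
for some `n ≥ 1`. -/
def IsRepellingRegion {Y : Type*} [TopologicalSpace Y] (f : Y → Y) (U : Set Y) : Prop :=
  f ⁻¹' U ⊆ U ∧ ∃ n : ℕ, 1 ≤ n ∧ f^[n] ⁻¹' closure U ⊆ interior U

/-- A repeller: `R = Inv⁺(U)` for some repelling region `U`. -/
def IsRepeller {Y : Type*} [TopologicalSpace Y] (f : Y → Y) (R : Set Y) : Prop :=
  ∃ U : Set Y, IsRepellingRegion f U ∧ R = MaxInvPlus f U

/-- A repelling neighborhood: `α(U) ⊆ int U`. -/
def IsRepellingNbhd {Y : Type*} [TopologicalSpace Y] (f : Y → Y) (U : Set Y) : Prop :=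
  AlphaLim f U ⊆ interior U

/-- A backward orbit: a sequence `γ : ℕ → Y` with `f (γ (k+1)) = γ k` for all `k`.
A backward orbit through `x` additionally satisfies `γ 0 = x`. -/
def IsBackwardOrbit {Y : Type*} (f : Y → Y) (γ : ℕ → Y) : Prop :=
  ∀ k : ℕ, f (γ (k + 1)) = γ k

/-- The orbital alpha-limit set `α_o(γ) = ⋂_{n ≥ 0} cl {γ m : m ≥ n}`. -/
def OrbAlpha {Y : Type*} [TopologicalSpace Y] (γ : ℕ → Y) : Set Y :=
  ⋂ n : ℕ, closure (γ '' {m : ℕ | n ≤ m})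

/-- The dual repeller of an attractor `A`: `A* = {x : ω(x) ∩ A = ∅}`. -/
def DualRepeller {Y : Type*} [TopologicalSpace Y] (f : Y → Y) (A : Set Y) : Set Y :=
  {x : Y | OmegaLim f {x} ∩ A = ∅}

/-- The dual attractor of a repeller `R`:
`R* = {x : ∃ backward orbit γ through x with α_o(γ) ∩ R = ∅}`. -/
def DualAttractor {Y : Type*} [TopologicalSpace Y] (f : Y → Y) (R : Set Y) : Set Y :=
  {x : Y | ∃ γ : ℕ → Y, γ 0 = x ∧ IsBackwardOrbit f γ ∧ OrbAlpha γ ∩ R = ∅}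

/-!
Write `B(A) = {x | ω(x) ⊆ A}` for the basin of `A`. On attractors, `A ↦ B(A)` already carries `∪` to
`∪`, `Inv(· ∩ ·)` to `∩`, `∅` to `∅` and `Inv(X)` to `X`, but `B(A)` is in general not an attracting
neighborhood. Taking preimages under any map `g : X → X`, continuous or not, preserves these
identities. For finitely many attractors, a `g` with finitely many values and `g y` close enough to
`y` makes each `g ⁻¹' B(A)` a neighborhood of `A` whose closure lies in the open set `B(A)`. Since
`A` attracts every compact subset of its basin, `g ⁻¹' B(A)` is then an attracting neighborhood
with omega-limit set `A`.
-/

open Filter Topology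

section MaxInv

variable {X : Type*} {f : X → X} {S U : Set X}

theorem maxInv_subset (f : X → X) (U : Set X) : MaxInv f U ⊆ U :=
  sUnion_subset fun _ hS => hS.1

theorem subset_maxInv (hS : f '' S = S) (hSU : S ⊆ U) : S ⊆ MaxInv f U :=
  subset_sUnion_of_mem ⟨hSU, hS⟩

theorem image_maxInv (f : X → X) (U : Set X) : f '' MaxInv f U = MaxInv f U := by
  rw [MaxInv, image_sUnion, image_congr (g := id) fun _ hS => hS.2, image_id]

theorem image_iterate_of_image_eq (hS : f '' S = S) (n : ℕ) : f^[n] '' S = S := by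
  rw [image_iterate_eq]
  exact Function.IsFixedPt.iterate hS n

end MaxInv

section OmegaLim

variable {X : Type*} {f : X → X} {S U : Set X} [TopologicalSpace X]

theorem omegaLim_eq_omegaLimit (f : X → X) (U : Set X) :
    OmegaLim f U = omegaLimit atTop (fun n => f^[n]) U := by
  have tail_eq (n : ℕ) : ⋃ m ≥ n, f^[m] '' U = image2 (fun m => f^[m]) (Ici n) U :=
    iUnion_image_left _
  have basis := (atTop_basis (α := ℕ)).biInter_mem
    (f := fun s => closure (image2 (fun m => f^[m]) s U))
    fun _ _ h => closure_mono (image2_subset h Subset.rfl)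
  simp only [OmegaLim, omegaLimit_def, tail_eq, basis, iInter_true]

theorem isClosed_omegaLim (f : X → X) (U : Set X) : IsClosed (OmegaLim f U) :=
  isClosed_iInter fun _ => isClosed_closure

theorem omegaLim_mono (hSU : S ⊆ U) : OmegaLim f S ⊆ OmegaLim f U := by
  simp only [omegaLim_eq_omegaLimit]
  exact omegaLimit_mono_right _ _ hSU

theorem omegaLim_empty (f : X → X) : OmegaLim f ∅ = ∅ := by
  simp only [OmegaLim, image_empty, iUnion_empty, closure_empty, iInter_const]

theorem omegaLim_union (f : X → X) (S U : Set X) :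
    OmegaLim f (S ∪ U) = OmegaLim f S ∪ OmegaLim f U := by
  simp only [omegaLim_eq_omegaLimit, omegaLimit_union]

theorem omegaLim_nonempty [CompactSpace X] (f : X → X) (hU : U.Nonempty) :
    (OmegaLim f U).Nonempty := by
  rw [omegaLim_eq_omegaLimit]
  exact nonempty_omegaLimit _ _ _ hU

theorem frequently_inter_preimage_nonempty_of_mem_omegaLim {y : X} (hy : y ∈ OmegaLim f U)
    {N : Set X} (hN : N ∈ 𝓝 y) : ∃ᶠ n in atTop, (U ∩ f^[n] ⁻¹' N).Nonempty := by
  rw [omegaLim_eq_omegaLimit, mem_omegaLimit_iff_frequently] at hy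
  exact hy N hN

theorem omegaLim_preimage_iterate_subset (f : X → X) (U : Set X) (n : ℕ) :
    OmegaLim f (f^[n] ⁻¹' U) ⊆ OmegaLim f U := by
  simp only [omegaLim_eq_omegaLimit]
  have iterate_eq : ∀ᶠ m in atTop, EqOn (id ∘ f^[m]) (f^[m - n] ∘ f^[n]) (f^[n] ⁻¹' U) := by
    filter_upwards [eventually_ge_atTop n] with m hnm x _
    simp only [Function.comp_apply, id_eq, ← Function.iterate_add_apply, Nat.sub_add_cancel hnm]
  calc omegaLimit atTop (fun m => f^[m]) (f^[n] ⁻¹' U)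
      ⊆ omegaLimit atTop (fun m => f^[m - n]) U :=
        mapsTo_omegaLimit' _ (mapsTo_preimage _ _) iterate_eq continuous_id
    _ ⊆ omegaLimit atTop (fun m => f^[m]) U :=
        omegaLimit_subset_of_tendsto _ _ (tendsto_sub_atTop_nat n)

theorem subset_omegaLim (hS : f '' S = S) (hSU : S ⊆ U) : S ⊆ OmegaLim f U :=
  subset_iInter fun n => calc
    S = f^[n] '' S := (image_iterate_of_image_eq hS n).symm
    _ ⊆ f^[n] '' U := image_mono hSU
    _ ⊆ ⋃ m ≥ n, f^[m] '' U := subset_iUnion₂_of_subset n le_rfl Subset.rfl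
    _ ⊆ closure (⋃ m ≥ n, f^[m] '' U) := subset_closure

theorem omegaLim_subset_closure (hU : MapsTo f U U) : OmegaLim f U ⊆ closure U :=
  (iInter_subset _ 0).trans <| closure_mono <| iUnion₂_subset fun m _ => (hU.iterate m).image_subset

theorem mapsTo_omegaLim (hf : Continuous f) (U : Set X) :
    MapsTo f (OmegaLim f U) (OmegaLim f U) := by
  simp only [omegaLim_eq_omegaLimit]
  refine (mapsTo_omegaLimit U (mapsTo_id U) (ϕ' := fun n => f^[n + 1])
    (fun n x => (Function.iterate_succ_apply' f n x).symm) hf).mono_right ?_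
  exact omegaLimit_subset_of_tendsto _ _ (tendsto_add_atTop_nat 1)

variable [CompactSpace X] [T2Space X]

theorem omegaLim_subset_image_omegaLim (hf : Continuous f) (U : Set X) :
    OmegaLim f U ⊆ f '' OmegaLim f U := by
  intro y hy
  by_contra y_notMem
  have image_compact : IsCompact (f '' OmegaLim f U) := (isClosed_omegaLim f U).isCompact.image hf
  obtain ⟨N, M, hN, hM, image_subset, y_mem, hNM⟩ :=
    SeparatedNhds.of_isCompact_isCompact image_compact isCompact_singleton
      (disjoint_singleton_right.2 y_notMem)
  have eventually_mem_preimage : ∀ᶠ n in atTop, MapsTo f^[n] U (f ⁻¹' N) :=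
    eventually_mapsTo_of_isOpen_of_omegaLimit_subset _ _ _ (hN.preimage hf)
      (omegaLim_eq_omegaLimit f U ▸ image_subset_iff.1 image_subset)
  have eventually_mem : ∀ᶠ n in atTop, MapsTo f^[n] U N := by
    refine (eventually_map.2 ?_ : ∀ᶠ n in map (· + 1) atTop, MapsTo f^[n] U N).filter_mono
      (map_add_atTop_eq_nat 1).ge
    filter_upwards [eventually_mem_preimage] with n hn x hx
    simpa only [Function.iterate_succ_apply', mem_preimage] using hn hx
  obtain ⟨n, ⟨x, hxU, hxM⟩, hn⟩ := ((frequently_inter_preimage_nonempty_of_mem_omegaLim hy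
    (hM.mem_nhds (singleton_subset_iff.1 y_mem))).and_eventually eventually_mem).exists
  exact hNM.notMem_of_mem_left (hn hxU) hxM

theorem image_omegaLim (hf : Continuous f) (U : Set X) : f '' OmegaLim f U = OmegaLim f U :=
  (mapsTo_omegaLim hf U).image_subset.antisymm (omegaLim_subset_image_omegaLim hf U)

theorem maxInv_eq_omegaLim (hf : Continuous f) (hU : OmegaLim f U ⊆ U) :
    MaxInv f U = OmegaLim f U :=
  (subset_omegaLim (image_maxInv f U) (maxInv_subset f U)).antisymm
    (subset_maxInv (image_omegaLim hf U) hU)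

end OmegaLim

section Attractor

variable {X : Type*} {f : X → X} {A U : Set X} [TopologicalSpace X] [CompactSpace X] [T2Space X]

theorem IsTrappingRegion.isAttractingNbhd (hf : Continuous f) (hU : IsTrappingRegion f U) :
    IsAttractingNbhd f U := by
  obtain ⟨image_subset, n, -, hn⟩ := hU
  calc OmegaLim f U
      = f^[n] '' OmegaLim f U := (image_iterate_of_image_eq (image_omegaLim hf U) n).symm
    _ ⊆ f^[n] '' closure U :=
        image_mono (omegaLim_subset_closure (mapsTo_iff_image_subset.2 image_subset))
    _ ⊆ interior U := hn

theorem IsAttractor.exists_isAttractingNbhd (hf : Continuous f) (hA : IsAttractor f A) :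
    ∃ U, IsAttractingNbhd f U ∧ OmegaLim f U = A := by
  obtain ⟨U, hU, rfl⟩ := hA
  have nbhd := hU.isAttractingNbhd hf
  exact ⟨U, nbhd, (maxInv_eq_omegaLim hf (nbhd.trans interior_subset)).symm⟩

theorem IsAttractor.isClosed (hf : Continuous f) (hA : IsAttractor f A) : IsClosed A := by
  obtain ⟨U, -, rfl⟩ := hA.exists_isAttractingNbhd hf
  exact isClosed_omegaLim f U

end Attractor

section Basin

variable {X : Type*} {f : X → X} {A U : Set X} [TopologicalSpace X]

/-- The basin of `A`: the points whose omega-limit set lies in `A`. It makes sense for every set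
`A`; for an attractor of a compact space it is the open set of points attracted by `A`. -/
def Basin (f : X → X) (A : Set X) : Set X :=
  {x | OmegaLim f {x} ⊆ A}

theorem basin_univ (f : X → X) : Basin f univ = univ :=
  eq_univ_of_forall fun _ => subset_univ _

theorem basin_inter (f : X → X) (A A' : Set X) : Basin f (A ∩ A') = Basin f A ∩ Basin f A' :=
  ext fun _ => subset_inter_iff

theorem subset_basin_omegaLim (f : X → X) (U : Set X) : U ⊆ Basin f (OmegaLim f U) :=
  fun _ hx => omegaLim_mono (singleton_subset_iff.2 hx)

variable [CompactSpace X]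

theorem basin_empty (f : X → X) : Basin f ∅ = ∅ :=
  eq_empty_of_forall_notMem fun x hx =>
    (omegaLim_nonempty f (singleton_nonempty x)).ne_empty (subset_empty_iff.1 hx)

variable [T2Space X]

theorem basin_maxInv (hf : Continuous f) (U : Set X) : Basin f (MaxInv f U) = Basin f U :=
  ext fun _ => ⟨fun hx => hx.trans (maxInv_subset f U), subset_maxInv (image_omegaLim hf _)⟩

theorem IsAttractor.subset_basin (hf : Continuous f) (hA : IsAttractor f A) : A ⊆ Basin f A := by
  obtain ⟨U, hU, rfl⟩ := hA.exists_isAttractingNbhd hf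
  exact (hU.trans interior_subset).trans (subset_basin_omegaLim f U)

theorem IsAttractor.exists_mem_nhds_omegaLim_subset (hf : Continuous f) (hA : IsAttractor f A)
    {x : X} (hx : (OmegaLim f {x} ∩ A).Nonempty) : ∃ V ∈ 𝓝 x, OmegaLim f V ⊆ A := by
  obtain ⟨U, hU, rfl⟩ := hA.exists_isAttractingNbhd hf
  obtain ⟨y, hyx, hyA⟩ := hx
  obtain ⟨n, _, rfl, hn⟩ := (frequently_inter_preimage_nonempty_of_mem_omegaLim hyx
    (isOpen_interior.mem_nhds (hU hyA))).exists
  exact ⟨f^[n] ⁻¹' interior U, (isOpen_interior.preimage (hf.iterate n)).mem_nhds hn,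
    (omegaLim_preimage_iterate_subset f _ n).trans (omegaLim_mono interior_subset)⟩

theorem IsAttractor.mem_basin_iff (hf : Continuous f) (hA : IsAttractor f A) {x : X} :
    x ∈ Basin f A ↔ (OmegaLim f {x} ∩ A).Nonempty := by
  refine ⟨fun hx => ?_, fun hx => ?_⟩
  · rw [inter_eq_left.2 hx]
    exact omegaLim_nonempty f (singleton_nonempty x)
  · obtain ⟨V, hV, hVA⟩ := hA.exists_mem_nhds_omegaLim_subset hf hx
    exact (omegaLim_mono (singleton_subset_iff.2 (mem_of_mem_nhds hV))).trans hVA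

theorem IsAttractor.isOpen_basin (hf : Continuous f) (hA : IsAttractor f A) :
    IsOpen (Basin f A) := by
  refine isOpen_iff_mem_nhds.2 fun x hx => ?_
  obtain ⟨V, hV, hVA⟩ := hA.exists_mem_nhds_omegaLim_subset hf ((hA.mem_basin_iff hf).1 hx)
  exact mem_of_superset hV fun y hy => (omegaLim_mono (singleton_subset_iff.2 hy)).trans hVA

theorem IsAttractor.basin_union (hf : Continuous f) {A' : Set X} (hA : IsAttractor f A)
    (hA' : IsAttractor f A') : Basin f (A ∪ A') = Basin f A ∪ Basin f A' := by
  refine Subset.antisymm (fun x hx => ?_) (union_subset ?_ ?_)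
  · obtain ⟨y, hy⟩ := omegaLim_nonempty f (singleton_nonempty x)
    exact (hx hy).imp (fun hyA => (hA.mem_basin_iff hf).2 ⟨y, hy, hyA⟩)
      fun hyA' => (hA'.mem_basin_iff hf).2 ⟨y, hy, hyA'⟩
  · exact fun x hx => hx.trans subset_union_left
  · exact fun x hx => hx.trans subset_union_right

theorem IsAttractor.omegaLim_subset_of_isCompact (hf : Continuous f) (hA : IsAttractor f A)
    {K : Set X} (hK : IsCompact K) (hKA : K ⊆ Basin f A) : OmegaLim f K ⊆ A := by
  refine hK.induction_on (p := fun S => OmegaLim f S ⊆ A) ?_ ?_ ?_ fun x hx => ?_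
  · exact (omegaLim_empty f).trans_subset (empty_subset A)
  · exact fun S T hST hT => (omegaLim_mono hST).trans hT
  · exact fun S T hS hT => (omegaLim_union f S T).trans_subset (union_subset hS hT)
  · obtain ⟨V, hV, hVA⟩ := hA.exists_mem_nhds_omegaLim_subset hf ((hA.mem_basin_iff hf).1 (hKA hx))
    exact ⟨V, mem_nhdsWithin_of_mem_nhds hV, hVA⟩

theorem IsAttractor.omegaLim_eq_of_closure_subset_basin (hf : Continuous f) (hA : IsAttractor f A)
    (hAU : A ⊆ U) (hU : closure U ⊆ Basin f A) : OmegaLim f U = A := by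
  refine Subset.antisymm ?_ ?_
  · exact (omegaLim_mono subset_closure).trans
      (hA.omegaLim_subset_of_isCompact hf isClosed_closure.isCompact hU)
  · obtain ⟨V, -, rfl⟩ := hA.exists_isAttractingNbhd hf
    exact subset_omegaLim (image_omegaLim hf V) hAU

end Basin

section Discretization

variable {X : Type*} [TopologicalSpace X] [CompactSpace X] [RegularSpace X]

theorem exists_closure_preimage_subset_biUnion {W : X → Set X} (hW : ∀ x, W x ∈ 𝓝 x) :
    ∃ g : X → X, ∀ P : Set X, closure (g ⁻¹' P) ⊆ ⋃ x ∈ P, W x := by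
  choose V V_nhds V_closed V_subset using fun x => exists_mem_nhds_isClosed_subset (hW x)
  obtain ⟨t, t_cover⟩ := CompactSpace.elim_nhds_subcover V V_nhds
  have mem_cover (y : X) : ∃ x ∈ t, y ∈ V x := by
    simpa only [mem_iUnion₂, exists_prop] using t_cover.ge (mem_univ y)
  choose g g_mem mem_V using mem_cover
  refine ⟨g, fun P => ?_⟩
  calc closure (g ⁻¹' P)
      ⊆ ⋃ x ∈ ↑t ∩ P, V x :=
        closure_minimal (fun y hy => mem_biUnion ⟨g_mem y, hy⟩ (mem_V y))
          ((t.finite_toSet.inter_of_left P).isClosed_biUnion fun x _ => V_closed x)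
    _ ⊆ ⋃ x ∈ P, W x := biUnion_mono inter_subset_right fun x _ => V_subset x

theorem exists_preimage_between {ι : Type*} {s : Set ι} (hs : s.Finite) {A B : ι → Set X}
    (hA : ∀ i ∈ s, IsClosed (A i)) (hB : ∀ i ∈ s, IsOpen (B i)) (hAB : ∀ i ∈ s, A i ⊆ B i) :
    ∃ g : X → X, ∀ i ∈ s, A i ⊆ interior (g ⁻¹' B i) ∧ closure (g ⁻¹' B i) ⊆ B i := by
  have eventually_separated (x : X) :
      ∀ᶠ y in 𝓝 x, ∀ i ∈ s, (x ∈ B i → y ∈ B i) ∧ (y ∈ A i → x ∈ B i) := by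
    refine hs.eventually_all.2 fun i hi => ?_
    by_cases hx : x ∈ B i
    · filter_upwards [(hB i hi).mem_nhds hx] with y hy using ⟨fun _ => hy, fun _ => hx⟩
    · filter_upwards [(hA i hi).isOpen_compl.mem_nhds fun hxA => hx (hAB i hi hxA)] with y hy
      exact ⟨fun hxB => absurd hxB hx, fun hyA => absurd hyA hy⟩
  obtain ⟨g, hg⟩ := exists_closure_preimage_subset_biUnion eventually_separated
  refine ⟨g, fun i hi => ⟨fun y hyA => ?_, fun y hy => ?_⟩⟩
  · by_contra hy
    rw [← mem_compl_iff, ← closure_compl, ← preimage_compl] at hy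
    obtain ⟨x, hx, hxy⟩ := mem_iUnion₂.1 (hg _ hy)
    exact hx ((hxy i hi).2 hyA)
  · obtain ⟨x, hx, hxy⟩ := mem_iUnion₂.1 (hg _ hy)
    exact (hxy i hi).1 hx

end Discretization

theorem finite_attractor_lattice_lifts_general
    {X : Type*} [TopologicalSpace X] [CompactSpace X] [T2Space X]
    {f : X → X} (hf : Continuous f) {𝒜 : Set (Set X)} (hfin : 𝒜.Finite)
    (hatt : ∀ A ∈ 𝒜, IsAttractor f A) :
    ∃ k : Set X → Set X,
      (∀ A ∈ 𝒜, IsAttractingNbhd f (k A) ∧ MaxInv f (k A) = A) ∧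
      k ∅ = ∅ ∧ k (MaxInv f univ) = univ ∧
      (∀ A A', IsAttractor f A → IsAttractor f A' → k (A ∪ A') = k A ∪ k A') ∧
      (∀ A A', k (MaxInv f (A ∩ A')) = k A ∩ k A') ∧
      InjOn k 𝒜 := by
  obtain ⟨g, hg⟩ := exists_preimage_between hfin (A := id) (B := Basin f)
    (fun A hA => (hatt A hA).isClosed hf) (fun A hA => (hatt A hA).isOpen_basin hf)
    (fun A hA => (hatt A hA).subset_basin hf)
  have omegaLim_eq (A) (hA : A ∈ 𝒜) : OmegaLim f (g ⁻¹' Basin f A) = A :=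
    (hatt A hA).omegaLim_eq_of_closure_subset_basin hf ((hg A hA).1.trans interior_subset)
      (hg A hA).2
  have nbhd (A) (hA : A ∈ 𝒜) : IsAttractingNbhd f (g ⁻¹' Basin f A) :=
    (omegaLim_eq A hA).trans_subset (hg A hA).1
  have maxInv_eq (A) (hA : A ∈ 𝒜) : MaxInv f (g ⁻¹' Basin f A) = A :=
    (maxInv_eq_omegaLim hf ((nbhd A hA).trans interior_subset)).trans (omegaLim_eq A hA)
  refine ⟨fun A => g ⁻¹' Basin f A, fun A hA => ⟨nbhd A hA, maxInv_eq A hA⟩, ?_, ?_, ?_, ?_, ?_⟩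
  · simp only [basin_empty, preimage_empty]
  · simp only [basin_maxInv hf, basin_univ, preimage_univ]
  · intro A A' hA hA'
    simp only [hA.basin_union hf hA', preimage_union]
  · intro A A'
    simp only [basin_maxInv hf, basin_inter, preimage_inter]
  · exact LeftInvOn.injOn maxInv_eq

/-- A finite sublattice of attractors lifts to a lattice of
attracting neighborhoods. -/
theorem finite_attractor_lattice_lifts
    {X : Type*} [MetricSpace X] [CompactSpace X]
    (f : X → X) (hf : Continuous f)
    (𝒜 : Set (Set X)) (hfin : 𝒜.Finite)
    (hatt : ∀ A ∈ 𝒜, IsAttractor f A)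
    (hbot : (∅ : Set X) ∈ 𝒜) (htop : MaxInv f Set.univ ∈ 𝒜)
    (hsup : ∀ A ∈ 𝒜, ∀ A' ∈ 𝒜, A ∪ A' ∈ 𝒜)
    (hinf : ∀ A ∈ 𝒜, ∀ A' ∈ 𝒜, MaxInv f (A ∩ A') ∈ 𝒜) :
    ∃ k : Set X → Set X,
      (∀ A ∈ 𝒜, IsAttractingNbhd f (k A) ∧ MaxInv f (k A) = A) ∧
      k ∅ = ∅ ∧ k (MaxInv f Set.univ) = Set.univ ∧
      (∀ A ∈ 𝒜, ∀ A' ∈ 𝒜, k (A ∪ A') = k A ∪ k A') ∧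
      (∀ A ∈ 𝒜, ∀ A' ∈ 𝒜, k (MaxInv f (A ∩ A')) = k A ∩ k A') ∧
      (∀ A ∈ 𝒜, ∀ A' ∈ 𝒜, k A = k A' → A = A') := by
  obtain ⟨k, hk, hempty, huniv, hunion, hinter, hinj⟩ :=
    finite_attractor_lattice_lifts_general hf hfin hatt
  exact ⟨k, hk, hempty, huniv, fun A hA A' hA' => hunion A A' (hatt A hA) (hatt A' hA'),
    fun A _ A' _ => hinter A A', fun A hA A' hA' => hinj hA hA'⟩
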